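/- Purity encoding of the α-Stabilizer Rényi Entropy (main encoding result): for every natural number n, every integer α ≥ 1, and every unit vector ψ : (Fin n → Fin 2) → ℂ, the purity of the channel output satisfies Re( trace(ρ_α * ρ_α) ) = d⁻¹ · A_α(ψ), where d = 2^n and ρ_α is the matrix indexed by (Fin α → Fin n → Fin 2) with entries ρ_α f g = d⁻² · Σ over all s : Fin n → Fin 4 of ∏_{m : Fin α} (P_s.mulVec ψ) (f m) · conj((P_s.mulVec ψ) (g m)). -/

import Mathlib

open Complex Matrix BigOperators

/-- The single-qubit Pauli matrices `Q₀ = 1`, `Q₁ = X`, `Q₂ = Y`, `Q₃ = Z`. -/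
noncomputable def Q : Fin 4 → Matrix (Fin 2) (Fin 2) ℂ :=
  ![1, !![0, 1; 1, 0], !![0, -Complex.I; Complex.I, 0], !![1, 0; 0, -1]]

/-- The `n`-qubit Pauli string `P_s`, the Kronecker product of the `Q (s k)`. -/
noncomputable def P {n : ℕ} (s : Fin n → Fin 4) :
    Matrix (Fin n → Fin 2) (Fin n → Fin 2) ℂ :=
  Matrix.of fun i j => ∏ k, Q (s k) (i k) (j k)


/-- `A_α(ψ) = d⁻¹ ∑_s ⟨ψ, P_s ψ⟩^(2α)` with `d = 2^n`. -/
noncomputable def A (n α : ℕ) (ψ : (Fin n → Fin 2) → ℂ) : ℝ :=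
  (2 ^ n : ℝ)⁻¹ * ∑ s : Fin n → Fin 4, (star ψ ⬝ᵥ (P s).mulVec ψ).re ^ (2 * α)


/-- The channel output `E_P^α(|ψ⟩⟨ψ|^⊗α)`: each Pauli string applied with probability `d⁻²`
simultaneously to all `α` copies of `ψ`. -/
noncomputable def rho (n α : ℕ) (ψ : (Fin n → Fin 2) → ℂ) :
    Matrix (Fin α → Fin n → Fin 2) (Fin α → Fin n → Fin 2) ℂ :=
  Matrix.of fun f g => ((2 ^ n : ℂ) ^ 2)⁻¹ *
    ∑ s : Fin n → Fin 4, ∏ m, ((P s).mulVec ψ (f m) * (starRingEnd ℂ) ((P s).mulVec ψ (g m)))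

/-- Multiplication table of Pauli indices modulo phases. -/
def px : Fin 4 → Fin 4 → Fin 4 :=
  ![![0,1,2,3],![1,0,3,2],![2,3,0,1],![3,2,1,0]]

lemma px_inv (a b : Fin 4) : px a (px a b) = b := by
  revert a b; decide

lemma Q_mul (a b : Fin 4) : ∃ c : ℂ, c * star c = 1 ∧ Q a * Q b = c • Q (px a b) := by
  have key : (Q a * Q b = (1:ℂ) • Q (px a b)) ∨ (Q a * Q b = Complex.I • Q (px a b)) ∨
      (Q a * Q b = (-Complex.I) • Q (px a b)) := by
    fin_cases a <;> fin_cases b <;>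
    first
    | (left; ext i j; fin_cases i <;> fin_cases j <;> simp [Q, px, Matrix.mul_apply]; done)
    | (right; left; ext i j; fin_cases i <;> fin_cases j <;> simp [Q, px, Matrix.mul_apply]; done)
    | (right; right; ext i j; fin_cases i <;> fin_cases j <;> simp [Q, px, Matrix.mul_apply]; done)
  rcases key with h | h | h
  · exact ⟨_, by simp, h⟩
  · exact ⟨_, by simp, h⟩
  · exact ⟨_, by simp, h⟩

lemma Q_herm (a : Fin 4) (i j : Fin 2) : star (Q a i j) = Q a j i := by
  fin_cases a <;> fin_cases i <;> fin_cases j <;> simp [Q]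

lemma P_herm {n : ℕ} (s : Fin n → Fin 4) : (P s)ᴴ = P s := by
  ext i j
  simp only [Matrix.conjTranspose_apply, P, Matrix.of_apply, star_prod, Q_herm]

lemma P_mul {n : ℕ} (s t : Fin n → Fin 4) :
    ∃ c : ℂ, c * star c = 1 ∧ P s * P t = c • P (fun k => px (s k) (t k)) := by
  choose c hc h using Q_mul
  refine ⟨∏ k, c (s k) (t k), ?_, ?_⟩
  · rw [star_prod, ← Finset.prod_mul_distrib]
    exact Finset.prod_eq_one fun k _ => hc _ _
  · ext i j
    have h2 : ∀ k, ∑ l, Q (s k) (i k) l * Q (t k) l (j k)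
        = c (s k) (t k) * Q (px (s k) (t k)) (i k) (j k) := by
      intro k
      rw [← Matrix.mul_apply, h]; simp
    simp only [Matrix.mul_apply, P, Matrix.of_apply, Matrix.smul_apply, smul_eq_mul,
      ← Finset.prod_mul_distrib]
    rw [← Finset.prod_congr rfl fun k _ => h2 k, Fintype.prod_sum]

lemma inner_herm {n : ℕ} (s t : Fin n → Fin 4) (ψ : (Fin n → Fin 2) → ℂ) :
    star ((P s).mulVec ψ) ⬝ᵥ (P t).mulVec ψ = star ψ ⬝ᵥ (P s * P t).mulVec ψ := by
  rw [Matrix.star_mulVec, P_herm, ← Matrix.dotProduct_mulVec, Matrix.mulVec_mulVec]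

lemma expect_real {n : ℕ} (s : Fin n → Fin 4) (ψ : (Fin n → Fin 2) → ℂ) :
    star (star ψ ⬝ᵥ (P s).mulVec ψ) = star ψ ⬝ᵥ (P s).mulVec ψ := by
  have h : star ((P s).mulVec ψ) ⬝ᵥ ψ = star ψ ⬝ᵥ (P s).mulVec ψ := by
    rw [Matrix.star_mulVec, P_herm, ← Matrix.dotProduct_mulVec]
  rw [← h]
  conv_rhs => rw [h]
  rw [Matrix.star_dotProduct, star_star]

lemma overlap {n : ℕ} (s t : Fin n → Fin 4) (ψ : (Fin n → Fin 2) → ℂ) :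
    (star ((P s).mulVec ψ) ⬝ᵥ (P t).mulVec ψ) * star (star ((P s).mulVec ψ) ⬝ᵥ (P t).mulVec ψ)
      = (((star ψ ⬝ᵥ (P fun k => px (s k) (t k)).mulVec ψ).re ^ 2 : ℝ) : ℂ) := by
  obtain ⟨c, hc, h⟩ := P_mul s t
  have hr := expect_real (fun k => px (s k) (t k)) ψ
  rw [inner_herm, h, Matrix.smul_mulVec, dotProduct_smul, smul_eq_mul, star_mul, hr]
  have h3 : (((star ψ ⬝ᵥ (P fun k => px (s k) (t k)).mulVec ψ).re : ℝ) : ℂ)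
    = star ψ ⬝ᵥ (P fun k => px (s k) (t k)).mulVec ψ := Complex.conj_eq_iff_re.mp hr
  rw [Complex.ofReal_pow, h3]
  linear_combination (star ψ ⬝ᵥ (P fun k => px (s k) (t k)).mulVec ψ) ^ 2 * hc

lemma trace_term {n : ℕ} (α : ℕ) (v w : (Fin n → Fin 2) → ℂ) :
    ∑ f : Fin α → Fin n → Fin 2, ∑ g : Fin α → Fin n → Fin 2,
      (∏ m, (v (f m) * (starRingEnd ℂ) (v (g m)))) * (∏ m, (w (g m) * (starRingEnd ℂ) (w (f m))))
    = ((star v ⬝ᵥ w) * star (star v ⬝ᵥ w)) ^ α := by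
  have h1 : star (star v ⬝ᵥ w) = ∑ i, v i * (starRingEnd ℂ) (w i) := by
    simp [dotProduct]
  have h2 : star v ⬝ᵥ w = ∑ i, (starRingEnd ℂ) (v i) * w i := by
    simp [dotProduct]
  rw [h1, h2, mul_comm, mul_pow, Fintype.sum_pow, Fintype.sum_pow, Finset.sum_mul_sum]
  refine Finset.sum_congr rfl fun f _ => Finset.sum_congr rfl fun g _ => ?_
  simp only [Finset.prod_mul_distrib]
  ring

lemma trace_eq (n α : ℕ) (ψ : (Fin n → Fin 2) → ℂ) :
    (rho n α ψ * rho n α ψ).trace = (((2 ^ n : ℂ) ^ 2)⁻¹) ^ 2 *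
      ∑ s : Fin n → Fin 4, ∑ t : Fin n → Fin 4,
        ((star ((P s).mulVec ψ) ⬝ᵥ (P t).mulVec ψ) *
          star (star ((P s).mulVec ψ) ⬝ᵥ (P t).mulVec ψ)) ^ α := by
  simp only [← trace_term]
  simp only [Matrix.trace, Matrix.diag, Matrix.mul_apply, rho, Matrix.of_apply]
  have : ∀ (F : (Fin n → Fin 4) → (Fin n → Fin 4) → (Fin α → Fin n → Fin 2) →
      (Fin α → Fin n → Fin 2) → ℂ),
      ∑ s, ∑ t, ∑ f, ∑ g, F s t f g = ∑ f, ∑ g, ∑ s, ∑ t, F s t f g := by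
    intro F
    calc _ = ∑ s, ∑ f, ∑ t, ∑ g, F s t f g :=
          Finset.sum_congr rfl fun s _ => Finset.sum_comm
      _ = ∑ f, ∑ s, ∑ t, ∑ g, F s t f g := Finset.sum_comm
      _ = ∑ f, ∑ s, ∑ g, ∑ t, F s t f g :=
          Finset.sum_congr rfl fun f _ => Finset.sum_congr rfl fun s _ => Finset.sum_comm
      _ = _ := Finset.sum_congr rfl fun f _ => Finset.sum_comm
  rw [this, Finset.mul_sum]
  refine Finset.sum_congr rfl fun f _ => ?_
  rw [Finset.mul_sum]
  refine Finset.sum_congr rfl fun g _ => ?_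
  rw [← Finset.sum_mul_sum]
  ring

theorem purity_encodes_A (n α : ℕ) (hα : 1 ≤ α) (ψ : (Fin n → Fin 2) → ℂ)
    (hψ : star ψ ⬝ᵥ ψ = 1) :
    ((rho n α ψ * rho n α ψ).trace).re = (2 ^ n : ℝ)⁻¹ * A n α ψ := by
  have hs : ∀ s : Fin n → Fin 4, ∑ t : Fin n → Fin 4,
      ((star ψ ⬝ᵥ (P fun k => px (s k) (t k)).mulVec ψ).re ^ 2) ^ α
      = ∑ t : Fin n → Fin 4, (star ψ ⬝ᵥ (P t).mulVec ψ).re ^ (2 * α) := by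
    intro s
    let e : (Fin n → Fin 4) ≃ (Fin n → Fin 4) :=
      ⟨fun t k => px (s k) (t k), fun t k => px (s k) (t k),
        fun t => funext fun k => px_inv _ _, fun t => funext fun k => px_inv _ _⟩
    rw [← Equiv.sum_comp e (fun t => (star ψ ⬝ᵥ (P t).mulVec ψ).re ^ (2 * α))]
    refine Finset.sum_congr rfl fun t _ => ?_
    rw [← pow_mul]
    rfl
  have h : (rho n α ψ * rho n α ψ).trace = (((((2 ^ n : ℝ) ^ 2)⁻¹) ^ 2 *
      ∑ s : Fin n → Fin 4, ∑ t : Fin n → Fin 4,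
      ((star ψ ⬝ᵥ (P fun k => px (s k) (t k)).mulVec ψ).re ^ 2) ^ α : ℝ) : ℂ) := by
    rw [trace_eq]
    simp only [overlap]
    push_cast
    rfl
  rw [h, Complex.ofReal_re, Finset.sum_congr rfl fun s _ => hs s, A]
  have h4 : (4:ℝ)^n = (2^n)^2 := by rw [← pow_mul, mul_comm, pow_mul]; norm_num
  simp only [Finset.sum_const, Finset.card_univ, Fintype.card_fun, Fintype.card_fin, nsmul_eq_mul]
  push_cast
  rw [h4]
  field_simp
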